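/- A function a : R⁺ → ℂ satisfies a(α+β) = a(α) + a(β) for all α, β ∈ R⁺ with α+β ∈ R⁺ if and only if a is a ℂ-linear combination of the coordinate functions A₁,…,Aₙ; consequently the vector space of such functions is n-dimensional with basis A₁,…,Aₙ. -/

import Mathlib

/-!
An additive function is determined by its values on the simple roots because every positive root
`β` that is not simple is `γ + αᵢ` for a positive root `γ` and some `i`. Indeed
`0 < ⟪β, β⟫ = ∑ᵢ Aᵢ(β) ⟪β, αᵢ⟫` gives an `i` with `Aᵢ(β) > 0` and `⟪β, αᵢ⟫ > 0`. Two distinct roots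
at an acute angle have a Cartan integer equal to `1`, so a reflection shows that `β - αᵢ` is a root,
and it is positive because only the `i`-th coordinate, which is at least `1`, has dropped.
-/

open scoped InnerProductSpace

/-- The combinatorial data attached to a simple finite-dimensional complex Lie algebra `𝔤`
of rank `n` with a fixed Cartan subalgebra and a fixed system of simple roots
`α₁, …, αₙ`: a reduced crystallographic *irreducible* root system `R` in a euclidean
space `V`, together with a base `simple : Fin n → V` (the simple roots) and the coordinate
functions `coord`, recording for each positive root `α = Σᵢ Aᵢ(α) αᵢ` the tuple
`(A₁(α), …, Aₙ(α))` of its coordinates with respect to the simple roots. -/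
structure RootSystemBase (n : ℕ) (V : Type*) [NormedAddCommGroup V]
    [InnerProductSpace ℝ V] : Type _ where
  /-- The (finite) set of roots. -/
  R : Finset V
  zero_not_mem : (0 : V) ∉ R
  span_eq_top : Submodule.span ℝ (R : Set V) = ⊤
  reduced : ∀ α ∈ R, ∀ c : ℝ, c • α ∈ R → c = 1 ∨ c = -1
  crystallographic : ∀ α ∈ R, ∀ β ∈ R, ∃ k : ℤ, (k : ℝ) = 2 * ⟪β, α⟫_ℝ / ⟪α, α⟫_ℝ
  reflect_mem : ∀ α ∈ R, ∀ β ∈ R, β - (2 * ⟪β, α⟫_ℝ / ⟪α, α⟫_ℝ) • α ∈ R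
  /-- irreducibility: `R` is not the union of two nonempty orthogonal subsets;
  equivalently `𝔤` is simple rather than merely semisimple. -/
  irreducible : ∀ S : Finset V, S ⊆ R → (∀ α ∈ S, ∀ β ∈ R, β ∉ S → ⟪α, β⟫_ℝ = 0) →
    S = ∅ ∨ S = R
  /-- The simple roots `α₁, …, αₙ`. -/
  simple : Fin n → V
  simple_mem : ∀ i, simple i ∈ R
  simple_linearIndependent : LinearIndependent ℝ simple
  /-- `coord β i` is the coefficient `Aᵢ(β)` of `β` in the basis of simple roots. -/
  coord : V → Fin n → ℤ
  root_eq_sum : ∀ β ∈ R, β = ∑ i, (coord β i : ℝ) • simple i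
  coord_sign : ∀ β ∈ R, (∀ i, 0 ≤ coord β i) ∨ (∀ i, coord β i ≤ 0)

namespace RootSystemBase

variable {n : ℕ} {V : Type*} [NormedAddCommGroup V] [InnerProductSpace ℝ V]
variable (Φ : RootSystemBase n V)

/-- `β` is a positive root. -/
def IsPos (β : V) : Prop := β ∈ Φ.R ∧ ∀ i, 0 ≤ Φ.coord β i

/-- The level `l(β) = Σᵢ Aᵢ(β)` of a root `β`. -/
def level (β : V) : ℤ := ∑ i, Φ.coord β i

/-- `μ` is the highest root. -/
def IsHighest (μ : V) : Prop :=
  Φ.IsPos μ ∧ ∀ β, Φ.IsPos β → ∀ i, Φ.coord β i ≤ Φ.coord μ i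

end RootSystemBase

namespace RootSystemBase

variable {n : ℕ} {V : Type*} [NormedAddCommGroup V] [InnerProductSpace ℝ V]
variable (Φ : RootSystemBase n V)

/-- The space of functions `a : R⁺ → ℂ` satisfying `a (α + β) = a α + a β`
whenever `α`, `β` and `α + β` are positive roots. -/
noncomputable def addFunctions : Submodule ℂ ({β : V // Φ.IsPos β} → ℂ) where
  carrier := {a | ∀ (α β : {β : V // Φ.IsPos β}) (h : Φ.IsPos (α.1 + β.1)),
    a ⟨α.1 + β.1, h⟩ = a α + a β}
  add_mem' := by
    intro a b ha hb α β h
    simp only [Pi.add_apply, ha α β h, hb α β h]; ring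
  zero_mem' := by intro α β h; simp
  smul_mem' := by
    intro c a ha α β h
    simp only [Pi.smul_apply, ha α β h, smul_eq_mul]; ring

end RootSystemBase

section CartanInteger

variable {V : Type*} [NormedAddCommGroup V] [InnerProductSpace ℝ V]

theorem cartanInteger_eq_one_or_eq_one {x y : V} (hne : x ≠ y) (hxy : 0 < ⟪x, y⟫_ℝ) {p q : ℤ}
    (hp : (p : ℝ) = 2 * ⟪x, y⟫_ℝ / ⟪y, y⟫_ℝ) (hq : (q : ℝ) = 2 * ⟪x, y⟫_ℝ / ⟪x, x⟫_ℝ) :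
    p = 1 ∨ q = 1 := by
  have hx : 0 < ⟪x, x⟫_ℝ := real_inner_self_pos.2 (by rintro rfl; simp at hxy)
  have hy : 0 < ⟪y, y⟫_ℝ := real_inner_self_pos.2 (by rintro rfl; simp at hxy)
  have hp_pos : 0 < p := by
    have : (0 : ℝ) < p := hp ▸ by positivity
    exact_mod_cast this
  have hq_pos : 0 < q := by
    have : (0 : ℝ) < q := hq ▸ by positivity
    exact_mod_cast this
  by_contra! h
  have hp_two : (2 : ℝ) ≤ p := by exact_mod_cast (by lia : 2 ≤ p)
  have hq_two : (2 : ℝ) ≤ q := by exact_mod_cast (by lia : 2 ≤ q)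
  rw [hp, le_div_iff₀ hy] at hp_two
  rw [hq, le_div_iff₀ hx] at hq_two
  have hsub : 0 < ⟪x - y, x - y⟫_ℝ := real_inner_self_pos.2 (sub_ne_zero.2 hne)
  rw [real_inner_sub_sub_self] at hsub
  linarith

end CartanInteger

/-- A set of roots that is crystallographic and stable under its own reflections, together with a
basis of its root lattice consisting of roots; a root system with a base is an example. Only the
values of `coord` on roots are meaningful. -/
structure RootLatticeBasis (ι V : Type*) [Fintype ι] [NormedAddCommGroup V]
    [InnerProductSpace ℝ V] where
  roots : Set V
  zero_notMem : (0 : V) ∉ roots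
  crystallographic : ∀ α ∈ roots, ∀ β ∈ roots, ∃ k : ℤ, (k : ℝ) = 2 * ⟪β, α⟫_ℝ / ⟪α, α⟫_ℝ
  reflect_mem : ∀ α ∈ roots, ∀ β ∈ roots, β - (2 * ⟪β, α⟫_ℝ / ⟪α, α⟫_ℝ) • α ∈ roots
  basis : ι → V
  basis_mem : ∀ i, basis i ∈ roots
  linearIndependent_basis : LinearIndependent ℝ basis
  coord : V → ι → ℤ
  eq_sum_coord : ∀ β ∈ roots, β = ∑ i, (coord β i : ℝ) • basis i

namespace RootLatticeBasis

variable {ι V : Type*} [Fintype ι] [NormedAddCommGroup V] [InnerProductSpace ℝ V]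
variable (Φ : RootLatticeBasis ι V)

section Roots

theorem inner_self_pos {α : V} (hα : α ∈ Φ.roots) : 0 < ⟪α, α⟫_ℝ :=
  real_inner_self_pos.2 (ne_of_mem_of_not_mem hα Φ.zero_notMem)

theorem neg_mem {α : V} (hα : α ∈ Φ.roots) : -α ∈ Φ.roots := by
  have h := Φ.reflect_mem α hα α hα
  rw [mul_div_cancel_right₀ _ (Φ.inner_self_pos hα).ne', two_smul] at h
  simpa only [sub_add_cancel_left] using h

theorem sub_mem_of_inner_pos {α β : V} (hα : α ∈ Φ.roots) (hβ : β ∈ Φ.roots) (hne : β ≠ α)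
    (hpos : 0 < ⟪β, α⟫_ℝ) : β - α ∈ Φ.roots := by
  obtain ⟨p, hp⟩ := Φ.crystallographic α hα β hβ
  obtain ⟨q, hq⟩ := Φ.crystallographic β hβ α hα
  have hreflect_β : β - (p : ℝ) • α ∈ Φ.roots := hp ▸ Φ.reflect_mem α hα β hβ
  have hreflect_α : α - (q : ℝ) • β ∈ Φ.roots := hq ▸ Φ.reflect_mem β hβ α hα
  rw [real_inner_comm] at hq
  obtain rfl | rfl := cartanInteger_eq_one_or_eq_one hne hpos hp hq
  · simpa using hreflect_β
  · simpa using Φ.neg_mem hreflect_α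

end Roots

section Coordinates

theorem coord_eq_of_eq_sum {β : V} (hβ : β ∈ Φ.roots) {f : ι → ℤ}
    (h : β = ∑ i, (f i : ℝ) • Φ.basis i) : Φ.coord β = f := by
  funext i
  exact_mod_cast Fintype.linearIndependent_iffₛ.1 Φ.linearIndependent_basis _ _
    ((Φ.eq_sum_coord β hβ).symm.trans h) i

theorem coord_add {α β : V} (hα : α ∈ Φ.roots) (hβ : β ∈ Φ.roots) (h : α + β ∈ Φ.roots) :
    Φ.coord (α + β) = Φ.coord α + Φ.coord β := by
  refine Φ.coord_eq_of_eq_sum h ?_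
  simp only [Pi.add_apply, Int.cast_add, add_smul, Finset.sum_add_distrib]
  rw [← Φ.eq_sum_coord α hα, ← Φ.eq_sum_coord β hβ]

theorem coord_basis [DecidableEq ι] (i : ι) : Φ.coord (Φ.basis i) = Pi.single i 1 :=
  Φ.coord_eq_of_eq_sum (Φ.basis_mem i) (by simp [Pi.single_apply])

end Coordinates

section PositiveRoots

/-- The positive roots: those with nonnegative coordinates. -/
def IsPos (β : V) : Prop := β ∈ Φ.roots ∧ ∀ i, 0 ≤ Φ.coord β i

theorem isPos_basis (i : ι) : Φ.IsPos (Φ.basis i) := by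
  classical
  refine ⟨Φ.basis_mem i, fun j => ?_⟩
  rw [Φ.coord_basis]
  exact (Pi.single_nonneg.2 zero_le_one : (0 : ι → ℤ) ≤ Pi.single i 1) j

variable {Φ}

theorem IsPos.exists_coord_pos_and_inner_pos {β : V} (hβ : Φ.IsPos β) :
    ∃ i, 0 < Φ.coord β i ∧ 0 < ⟪β, Φ.basis i⟫_ℝ := by
  have hsum : 0 < ∑ i, (Φ.coord β i : ℝ) * ⟪β, Φ.basis i⟫_ℝ :=
    calc
      0 < ⟪β, β⟫_ℝ := Φ.inner_self_pos hβ.1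
      _ = ⟪β, ∑ i, (Φ.coord β i : ℝ) • Φ.basis i⟫_ℝ := by rw [← Φ.eq_sum_coord β hβ.1]
      _ = ∑ i, (Φ.coord β i : ℝ) * ⟪β, Φ.basis i⟫_ℝ := by simp only [inner_sum, inner_smul_right]
  obtain ⟨i, -, hi⟩ := Finset.exists_lt_of_sum_lt (by simpa using hsum : ∑ _i : ι, (0 : ℝ) < _)
  have hcoord : (0 : ℝ) ≤ Φ.coord β i := by exact_mod_cast hβ.2 i
  have hinner : 0 < ⟪β, Φ.basis i⟫_ℝ := pos_of_mul_pos_right hi hcoord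
  exact ⟨i, by exact_mod_cast pos_of_mul_pos_left hi hinner.le, hinner⟩

theorem IsPos.sub_basis {β : V} (hβ : Φ.IsPos β) {i : ι} (hcoord : 0 < Φ.coord β i)
    (hmem : β - Φ.basis i ∈ Φ.roots) : Φ.IsPos (β - Φ.basis i) := by
  classical
  refine ⟨hmem, fun j => ?_⟩
  have hadd := congrFun (Φ.coord_add hmem (Φ.basis_mem i) (by simpa using hβ.1)) j
  rw [sub_add_cancel, Φ.coord_basis, Pi.add_apply, Pi.single_apply] at hadd
  have hj := hβ.2 j
  split_ifs at hadd with hji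
  · subst hji
    lia
  · lia

theorem IsPos.eq_basis_or_eq_add_basis {β : V} (hβ : Φ.IsPos β) :
    ∃ i, β = Φ.basis i ∨ ∃ γ, Φ.IsPos γ ∧ β = γ + Φ.basis i := by
  obtain ⟨i, hcoord, hinner⟩ := hβ.exists_coord_pos_and_inner_pos
  refine ⟨i, or_iff_not_imp_left.2 fun hne => ⟨β - Φ.basis i, ?_, (sub_add_cancel _ _).symm⟩⟩
  exact hβ.sub_basis hcoord (Φ.sub_mem_of_inner_pos (Φ.basis_mem i) hβ.1 hne hinner)

theorem sum_coord_add_basis {γ : V} {i : ι} (hγ : Φ.IsPos γ) (h : Φ.IsPos (γ + Φ.basis i)) :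
    ∑ j, Φ.coord (γ + Φ.basis i) j = ∑ j, Φ.coord γ j + 1 := by
  classical
  simp [Φ.coord_add hγ.1 (Φ.basis_mem i) h.1, Φ.coord_basis, Finset.sum_add_distrib]

theorem IsPos.induction_on_add {motive : ∀ β, Φ.IsPos β → Prop}
    (basis : ∀ i, motive (Φ.basis i) (Φ.isPos_basis i))
    (add_basis : ∀ γ i (hγ : Φ.IsPos γ) (h : Φ.IsPos (γ + Φ.basis i)),
      motive γ hγ → motive (γ + Φ.basis i) h)
    {β : V} (hβ : Φ.IsPos β) : motive β hβ := by
  induction hN : (∑ j, Φ.coord β j).toNat using Nat.strong_induction_on generalizing β with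
  | _ N ih =>
    obtain ⟨i, rfl | ⟨γ, hγ, rfl⟩⟩ := hβ.eq_basis_or_eq_add_basis
    · exact basis i
    · have hlevel := sum_coord_add_basis hγ hβ
      have hγ_level : 0 ≤ ∑ j, Φ.coord γ j := Finset.sum_nonneg fun j _ => hγ.2 j
      exact add_basis γ i hγ hβ (ih _ (by lia) hγ rfl)

end PositiveRoots

section AdditiveFunctions

/-- Additivity of a function on the positive roots, tested on those pairs of positive roots whose
sum is a positive root. -/
def IsAdditive {G : Type*} [Add G] (a : {β : V // Φ.IsPos β} → G) : Prop :=
  ∀ (α β : {β : V // Φ.IsPos β}) (h : Φ.IsPos (α.1 + β.1)), a ⟨α.1 + β.1, h⟩ = a α + a β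

section AddCommGroup

variable {Φ} {G : Type*} [AddCommGroup G] {a : {β : V // Φ.IsPos β} → G}

theorem IsAdditive.eq_sum_coord_smul (ha : Φ.IsAdditive a) (β : {β : V // Φ.IsPos β}) :
    a β = ∑ i, Φ.coord β.1 i • a ⟨Φ.basis i, Φ.isPos_basis i⟩ := by
  classical
  obtain ⟨β, hβ⟩ := β
  induction hβ using IsPos.induction_on_add with
  | basis i => simp [Φ.coord_basis, Pi.single_apply]
  | add_basis γ i hγ h ih =>
    rw [ha ⟨γ, hγ⟩ ⟨Φ.basis i, Φ.isPos_basis i⟩ h, ih]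
    simp [Φ.coord_add hγ.1 (Φ.basis_mem i) h.1, Φ.coord_basis, Pi.single_apply, add_smul,
      Finset.sum_add_distrib]

theorem isAdditive_iff_exists_eq_sum_coord_smul :
    Φ.IsAdditive a ↔ ∃ c : ι → G, ∀ β, a β = ∑ i, Φ.coord β.1 i • c i := by
  refine ⟨fun ha => ⟨_, ha.eq_sum_coord_smul⟩, ?_⟩
  rintro ⟨c, hc⟩ α β h
  simp only [hc, Φ.coord_add α.2.1 β.2.1 h.1, Pi.add_apply, add_smul, Finset.sum_add_distrib]

end AddCommGroup

variable (K : Type*) [Ring K]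

/-- The `K`-module of additive functions on the positive roots. -/
def additiveFunctions : Submodule K ({β : V // Φ.IsPos β} → K) where
  carrier := {a | Φ.IsAdditive a}
  add_mem' ha hb α β h := by simp only [Pi.add_apply, ha α β h, hb α β h, add_add_add_comm]
  zero_mem' α β h := by simp
  smul_mem' c a ha α β h := by simp only [Pi.smul_apply, ha α β h, smul_add]

/-- The coordinate functions `Aᵢ` restricted to the positive roots, with values in `K`. -/
def coordFunction (i : ι) (β : {β : V // Φ.IsPos β}) : K := Φ.coord β.1 i

theorem linearIndependent_coordFunction : LinearIndependent K (Φ.coordFunction K) := by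
  classical
  refine Fintype.linearIndependent_iff.2 fun c hc i => ?_
  have hi := congrFun hc ⟨Φ.basis i, Φ.isPos_basis i⟩
  simpa [coordFunction, Φ.coord_basis, Pi.single_apply] using hi

variable {K} in
theorem isAdditive_iff_exists_eq_sum_mul_coordFunction {a : {β : V // Φ.IsPos β} → K} :
    Φ.IsAdditive a ↔ ∃ c : ι → K, ∀ β, a β = ∑ i, c i * Φ.coordFunction K i β := by
  simp only [isAdditive_iff_exists_eq_sum_coord_smul, coordFunction, zsmul_eq_mul, Int.cast_comm]

theorem span_range_coordFunction :
    Submodule.span K (Set.range (Φ.coordFunction K)) = Φ.additiveFunctions K := by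
  ext a
  change _ ↔ Φ.IsAdditive a
  simp [Submodule.mem_span_range_iff_exists_fun, isAdditive_iff_exists_eq_sum_mul_coordFunction,
    funext_iff, eq_comm]

theorem finrank_additiveFunctions [StrongRankCondition K] :
    Module.finrank K (Φ.additiveFunctions K) = Fintype.card ι := by
  have : Nontrivial K := nontrivial_of_invariantBasisNumber K
  rw [← Φ.span_range_coordFunction K, finrank_span_eq_card (Φ.linearIndependent_coordFunction K)]

end AdditiveFunctions

end RootLatticeBasis

theorem additive_functions_on_positive_roots_general {ι V : Type*} [Fintype ι]
    [NormedAddCommGroup V] [InnerProductSpace ℝ V] (Φ : RootLatticeBasis ι V)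
    (K : Type*) [Ring K] [StrongRankCondition K] :
    (∀ a : V → K,
      (∀ α β : V, Φ.IsPos α → Φ.IsPos β → Φ.IsPos (α + β) → a (α + β) = a α + a β) ↔
      (∃ c : ι → K, ∀ α : V, Φ.IsPos α → a α = ∑ i, c i * (Φ.coord α i : K))) ∧
    LinearIndependent K (Φ.coordFunction K) ∧
    Submodule.span K (Set.range (Φ.coordFunction K)) = Φ.additiveFunctions K ∧
    Module.finrank K (Φ.additiveFunctions K) = Fintype.card ι := by
  refine ⟨fun a => ?_, Φ.linearIndependent_coordFunction K, Φ.span_range_coordFunction K,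
    Φ.finrank_additiveFunctions K⟩
  calc
    _ ↔ Φ.IsAdditive fun β => a β.1 :=
      ⟨fun ha α β h => ha α β α.2 β.2 h, fun ha α β hα hβ h => ha ⟨α, hα⟩ ⟨β, hβ⟩ h⟩
    _ ↔ ∃ c : ι → K, ∀ α : V, Φ.IsPos α → a α = ∑ i, c i * (Φ.coord α i : K) := by
      simp only [Φ.isAdditive_iff_exists_eq_sum_mul_coordFunction, Subtype.forall,
        RootLatticeBasis.coordFunction]

/-- The simple roots of a root system, viewed as a basis of its root lattice. -/
def RootSystemBase.toRootLatticeBasis {n : ℕ} {V : Type*} [NormedAddCommGroup V]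
    [InnerProductSpace ℝ V] (Φ : RootSystemBase n V) : RootLatticeBasis (Fin n) V where
  roots := Φ.R
  zero_notMem := Φ.zero_not_mem
  crystallographic := Φ.crystallographic
  reflect_mem := Φ.reflect_mem
  basis := Φ.simple
  basis_mem := Φ.simple_mem
  linearIndependent_basis := Φ.simple_linearIndependent
  coord := Φ.coord
  eq_sum_coord := Φ.root_eq_sum

/-- A function `a : R⁺ → ℂ` satisfies `a (α+β) = a α + a β` for all
`α, β ∈ R⁺` with `α + β ∈ R⁺` if and only if `a` is a `ℂ`-linear combination of the
coordinate functions `A₁, …, Aₙ`; consequently the vector space of such functions is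
`n`-dimensional with basis `A₁, …, Aₙ`. -/
theorem additive_functions_on_positive_roots
    {n : ℕ} {V : Type*} [NormedAddCommGroup V] [InnerProductSpace ℝ V]
    (Φ : RootSystemBase n V) :
    (∀ a : V → ℂ,
      (∀ α β : V, Φ.IsPos α → Φ.IsPos β → Φ.IsPos (α + β) → a (α + β) = a α + a β) ↔
      (∃ c : Fin n → ℂ, ∀ α : V, Φ.IsPos α → a α = ∑ i, c i * (Φ.coord α i : ℂ))) ∧
    LinearIndependent ℂ
      (fun i : Fin n => fun β : {β : V // Φ.IsPos β} => (Φ.coord β.1 i : ℂ)) ∧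
    Submodule.span ℂ
      (Set.range fun i : Fin n => fun β : {β : V // Φ.IsPos β} => (Φ.coord β.1 i : ℂ)) =
      Φ.addFunctions ∧
    Module.finrank ℂ Φ.addFunctions = n := by
  obtain ⟨hiff, hindep, hspan, hrank⟩ :=
    additive_functions_on_positive_roots_general Φ.toRootLatticeBasis ℂ
  exact ⟨hiff, hindep, hspan, hrank.trans (Fintype.card_fin n)⟩
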